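/- arXiv:2410.00322 — 5 statements merged into one kernel-verified Lean document; each statement's English description precedes it below -/
import Mathlib

section
/- Let X₁ and X₂ be independent real-valued random variables with probability density functions f₁ and f₂, where f₂ is symmetric about its mean μ₂ (i.e. f₂(μ₂ + t) = f₂(μ₂ − t) for all t) and X₂ is integrable. Then for every w ∈ (0,1) and every mean μ₁ ∈ ℝ, E[ X₂ · 1{(1−w)(X₂−μ₂)² < w(X₁−μ₁)²} ] = μ₂ · P( (1−w)(X₂−μ₂)² < w(X₁−μ₁)² ). Consequently, conditioned on the event that the weighted quadratic deviation of X₂ from its mean is smaller than that of X₁, the conditional expectation of X₂ equals μ₂. -/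
open MeasureTheory

/-- Let `X₁` and `X₂` be independent real-valued random variables with
probability density functions `f₁` and `f₂`, where `f₂` is symmetric about its mean `μ₂`
and `X₂` is integrable. Then for every `w ∈ (0,1)` and every `μ₁ ∈ ℝ`,
`E[X₂ · 1{(1−w)(X₂−μ₂)² < w(X₁−μ₁)²}] = μ₂ · P((1−w)(X₂−μ₂)² < w(X₁−μ₁)²)`.
Consequently, conditioned on that event (when it has positive probability), the conditional
expectation of `X₂` equals `μ₂`. -/
theorem stmt0 {Ω : Type*} [MeasurableSpace Ω] (μ : Measure Ω) [IsProbabilityMeasure μ]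
    (X₁ X₂ : Ω → ℝ) (hX₁ : Measurable X₁) (hX₂ : Measurable X₂)
    (hindep : ProbabilityTheory.IndepFun X₁ X₂ μ)
    (f₁ f₂ : ℝ → ℝ) (hf₁0 : ∀ x, 0 ≤ f₁ x) (hf₂0 : ∀ x, 0 ≤ f₂ x)
    (hX₁pdf : μ.map X₁ = volume.withDensity fun x => ENNReal.ofReal (f₁ x))
    (hX₂pdf : μ.map X₂ = volume.withDensity fun x => ENNReal.ofReal (f₂ x))
    (μ₂ : ℝ) (hsym : ∀ t, f₂ (μ₂ + t) = f₂ (μ₂ - t))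
    (hint : Integrable X₂ μ)
    (w : ℝ) (hw : w ∈ Set.Ioo (0 : ℝ) 1) (μ₁ : ℝ) :
    (∫ ω in {ω | (1 - w) * (X₂ ω - μ₂) ^ 2 < w * (X₁ ω - μ₁) ^ 2}, X₂ ω ∂μ) =
        μ₂ * (μ {ω | (1 - w) * (X₂ ω - μ₂) ^ 2 < w * (X₁ ω - μ₁) ^ 2}).toReal ∧
      (μ {ω | (1 - w) * (X₂ ω - μ₂) ^ 2 < w * (X₁ ω - μ₁) ^ 2} ≠ 0 →
        (∫ ω in {ω | (1 - w) * (X₂ ω - μ₂) ^ 2 < w * (X₁ ω - μ₁) ^ 2}, X₂ ω ∂μ) /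
            (μ {ω | (1 - w) * (X₂ ω - μ₂) ^ 2 < w * (X₁ ω - μ₁) ^ 2}).toReal = μ₂) := by
  have hr : MeasurePreserving (fun y : ℝ => 2 * μ₂ - y) volume volume :=
    Measure.measurePreserving_sub_left volume (2 * μ₂)
  have hemb : MeasurableEmbedding (fun y : ℝ => 2 * μ₂ - y) :=
    (MeasurableEquiv.subLeft (2 * μ₂)).measurableEmbedding
  have hν : MeasurePreserving (fun y : ℝ => 2 * μ₂ - y) (μ.map X₂) (μ.map X₂) := by
    refine ⟨hr.measurable, ?_⟩
    ext s hs
    rw [Measure.map_apply hr.measurable hs, hX₂pdf, withDensity_apply _ hs,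
      withDensity_apply _ (hr.measurable hs),
      ← hr.setLIntegral_comp_preimage_emb hemb _ s]
    congr 1
    funext y
    have h := hsym (μ₂ - y)
    rw [show μ₂ + (μ₂ - y) = 2 * μ₂ - y by ring, show μ₂ - (μ₂ - y) = y by ring] at h
    rw [h]
  haveI : IsProbabilityMeasure (μ.map X₁) := Measure.isProbabilityMeasure_map hX₁.aemeasurable
  haveI : IsProbabilityMeasure (μ.map X₂) := Measure.isProbabilityMeasure_map hX₂.aemeasurable
  have hjoint : μ.map (fun ω => (X₁ ω, X₂ ω)) = (μ.map X₁).prod (μ.map X₂) :=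
    (ProbabilityTheory.indepFun_iff_map_prod_eq_prod_map_map hX₁.aemeasurable
      hX₂.aemeasurable).1 hindep
  have hP : MeasurePreserving (Prod.map id (fun y : ℝ => 2 * μ₂ - y))
      ((μ.map X₁).prod (μ.map X₂)) ((μ.map X₁).prod (μ.map X₂)) :=
    (MeasurePreserving.id _).prod hν
  have hPemb : MeasurableEmbedding (Prod.map (id : ℝ → ℝ) (fun y : ℝ => 2 * μ₂ - y)) :=
    MeasurableEmbedding.id.prodMap hemb
  set S : Set (ℝ × ℝ) := {p | (1 - w) * (p.2 - μ₂) ^ 2 < w * (p.1 - μ₁) ^ 2} with hSdef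
  have hS : MeasurableSet S := measurableSet_lt (by fun_prop) (by fun_prop)
  set A : Set Ω := {ω | (1 - w) * (X₂ ω - μ₂) ^ 2 < w * (X₁ ω - μ₁) ^ 2} with hAdef
  have hpair : Measurable (fun ω => (X₁ ω, X₂ ω)) := hX₁.prodMk hX₂
  have hzero : ∫ p in S, (p.2 - μ₂) ∂((μ.map X₁).prod (μ.map X₂)) = 0 := by
    have h1 := hP.setIntegral_preimage_emb hPemb (fun p : ℝ × ℝ => p.2 - μ₂) S
    have hpre : Prod.map (id : ℝ → ℝ) (fun y : ℝ => 2 * μ₂ - y) ⁻¹' S = S := by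
      ext ⟨x, y⟩
      simp only [hSdef, Set.mem_preimage, Set.mem_setOf_eq, Prod.map_apply, id]
      rw [show (2 * μ₂ - y - μ₂) ^ 2 = (y - μ₂) ^ 2 by ring]
    rw [hpre] at h1
    have h2 : ∀ p : ℝ × ℝ, (Prod.map (id : ℝ → ℝ) (fun y : ℝ => 2 * μ₂ - y) p).2 - μ₂
        = -(p.2 - μ₂) := by
      rintro ⟨x, y⟩
      simp only [Prod.map_apply]
      ring
    simp only [h2, integral_neg] at h1
    linarith
  have hzero' : ∫ ω in A, (X₂ ω - μ₂) ∂μ = 0 := by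
    rw [← hjoint, setIntegral_map hS (by fun_prop) hpair.aemeasurable] at hzero
    exact hzero
  have main : ∫ ω in A, X₂ ω ∂μ = μ₂ * (μ A).toReal := by
    rw [integral_sub hint.integrableOn (integrable_const _), setIntegral_const] at hzero'
    simp only [smul_eq_mul, Measure.real] at hzero'
    linarith
  refine ⟨main, fun h => ?_⟩
  rw [main]
  exact mul_div_cancel_right₀ _ (ENNReal.toReal_ne_zero.2 ⟨h, measure_ne_top _ _⟩)
end

section
/- The function H is strictly monotone increasing on (0,1): for all 0 < w < w′ < 1, H(w) < H(w′). -/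
open MeasureTheory Set

/-- `Hfun f₁ f₂ w = E[X₂² · 1{(1−w)X₂² < wX₁²}]` for independent `X₁ ∼ f₁`, `X₂ ∼ f₂`,
written as a double integral against the product density. -/
noncomputable def Hfun (f₁ f₂ : ℝ → ℝ) (w : ℝ) : ℝ :=
  ∫ x₁ : ℝ, (∫ x₂ : ℝ, (if (1 - w) * x₂ ^ 2 < w * x₁ ^ 2 then x₂ ^ 2 else 0) * f₂ x₂) * f₁ x₁

/-- `Gfun f₁ f₂ w = E[X₁² · 1{(1−w)X₂² ≥ wX₁²}]` for independent `X₁ ∼ f₁`, `X₂ ∼ f₂`,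
written as a double integral against the product density. -/
noncomputable def Gfun (f₁ f₂ : ℝ → ℝ) (w : ℝ) : ℝ :=
  ∫ x₁ : ℝ, (∫ x₂ : ℝ, (if w * x₁ ^ 2 ≤ (1 - w) * x₂ ^ 2 then x₁ ^ 2 else 0) * f₂ x₂) * f₁ x₁

/-- The receiver's expected loss `L(w ∣ θ) = θ·G(w) + (1−θ)·H(w)`. -/
noncomputable def Lfun (f₁ f₂ : ℝ → ℝ) (w θ : ℝ) : ℝ :=
  θ * Gfun f₁ f₂ w + (1 - θ) * Hfun f₁ f₂ w

/-- A probability density on `ℝ` that is continuous, everywhere positive, symmetric about `0`,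
and has a finite second moment. -/
def GoodDensity (f : ℝ → ℝ) : Prop :=
  Continuous f ∧ (∀ x, 0 < f x) ∧ (∀ x, f (-x) = f x) ∧
    (∫ x : ℝ, f x) = 1 ∧ Integrable fun x : ℝ => x ^ 2 * f x

lemma int_lt_aux {f g : ℝ → ℝ} (hf : Integrable f) (hg : Integrable g)
    (hle : f ≤ᵐ[volume] g) (hlt : volume {x | f x < g x} ≠ 0) :
    (∫ x, f x) < ∫ x, g x := by
  rw [← sub_pos, ← integral_sub hg hf, integral_pos_iff_support_of_nonneg_ae]
  · refine pos_iff_ne_zero.2 (mt (measure_mono_null ?_) hlt)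
    exact fun x hx => (sub_pos.2 hx.out).ne'
  exacts [hle.mono fun x => sub_nonneg.2, hg.sub hf]

lemma inner_integrable (f : ℝ → ℝ) (hf : GoodDensity f) (w x : ℝ) :
    Integrable (fun y : ℝ => (if (1 - w) * y ^ 2 < w * x ^ 2 then y ^ 2 else 0) * f y) := by
  obtain ⟨hc, hp, -, -, hi⟩ := hf
  refine hi.mono' ?_ ?_
  · refine Measurable.aestronglyMeasurable ?_
    refine Measurable.mul (Measurable.ite ?_ (by fun_prop) (by fun_prop)) hc.measurable
    exact measurableSet_lt (by fun_prop) (by fun_prop)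
  · refine Filter.Eventually.of_forall fun y => ?_
    have := hp y
    split_ifs
    · rw [Real.norm_of_nonneg (by positivity)]
    · simp only [zero_mul, norm_zero]; positivity

lemma outer_integrable (f₁ f₂ : ℝ → ℝ) (hf₁ : GoodDensity f₁) (hf₂ : GoodDensity f₂) (w : ℝ) :
    Integrable (fun x : ℝ =>
      (∫ y : ℝ, (if (1 - w) * y ^ 2 < w * x ^ 2 then y ^ 2 else 0) * f₂ y) * f₁ x) := by
  have hI := inner_integrable f₂ hf₂ w
  obtain ⟨hc, hp, -, h1, -⟩ := hf₁
  obtain ⟨hc2, hp2, -, -, hi2⟩ := hf₂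
  have hi1 : Integrable f₁ := by
    by_contra h
    rw [integral_undef h] at h1
    exact zero_ne_one h1
  refine hi1.bdd_mul (c := ∫ y : ℝ, y ^ 2 * f₂ y) ?_ ?_
  · refine StronglyMeasurable.aestronglyMeasurable ?_
    refine StronglyMeasurable.integral_prod_right
      (f := fun (x y : ℝ) => (if (1 - w) * y ^ 2 < w * x ^ 2 then y ^ 2 else 0) * f₂ y) ?_
    refine Measurable.stronglyMeasurable ?_
    refine Measurable.mul (Measurable.ite ?_ (by fun_prop) (by fun_prop))
      (hc2.measurable.comp measurable_snd)
    exact measurableSet_lt (by fun_prop) (by fun_prop)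
  · refine Filter.Eventually.of_forall fun x => ?_
    rw [Real.norm_of_nonneg]
    · refine integral_mono (hI x) hi2 fun y => ?_
      have := hp2 y
      dsimp only
      split_ifs
      · exact le_rfl
      · rw [zero_mul]; positivity
    · refine integral_nonneg fun y => ?_
      have := hp2 y
      dsimp only
      split_ifs <;> simp <;> positivity

lemma inner_lt (f : ℝ → ℝ) (hf : GoodDensity f) (w w' : ℝ) (h0 : 0 < w) (h : w < w')
    (h1 : w' < 1) (x : ℝ) (hx : x ≠ 0) :
    (∫ y : ℝ, (if (1 - w) * y ^ 2 < w * x ^ 2 then y ^ 2 else 0) * f y) <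
    ∫ y : ℝ, (if (1 - w') * y ^ 2 < w' * x ^ 2 then y ^ 2 else 0) * f y := by
  have hp := hf.2.1
  have hx2 : 0 < x ^ 2 := by positivity
  refine int_lt_aux
    (inner_integrable f hf w x) (inner_integrable f hf w' x) ?_ ?_
  · refine Filter.Eventually.of_forall fun y => ?_
    have := hp y
    dsimp only
    gcongr
    split_ifs with ha hb
    · exact le_rfl
    · nlinarith [sq_nonneg y]
    · positivity
    · exact le_rfl
  · set a := w * x ^ 2 / (1 - w) with ha
    set b := w' * x ^ 2 / (1 - w') with hb
    have hw : 0 < 1 - w := by linarith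
    have hw' : 0 < 1 - w' := by linarith
    have ha0 : 0 < a := by positivity
    have hab : a < b := by
      rw [ha, hb, div_lt_div_iff₀ hw hw']
      nlinarith
    have hs : Real.sqrt a < Real.sqrt b := Real.sqrt_lt_sqrt ha0.le hab
    refine fun hz => (?_ : volume (Ioo (Real.sqrt a) (Real.sqrt b)) ≠ 0) (measure_mono_null ?_ hz)
    · rw [Real.volume_Ioo]
      simpa using hs
    · intro y hy
      have hy0 : 0 < y := (Real.sqrt_nonneg a).trans_lt hy.1
      have h2 : a < y ^ 2 := (Real.sqrt_lt' hy0).1 hy.1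
      have h3 : y ^ 2 < b := (Real.lt_sqrt hy0.le).1 hy.2
      rw [ha, div_lt_iff₀ hw] at h2
      rw [hb, lt_div_iff₀ hw'] at h3
      have := hp y
      rw [mem_setOf_eq, if_neg (by linarith), if_pos (by linarith)]
      rw [zero_mul]
      positivity

/-- `H` is strictly monotone increasing on `(0,1)`:
for all `0 < w < w′ < 1`, `H(w) < H(w′)`. -/
theorem stmt5 (f₁ f₂ : ℝ → ℝ) (hf₁ : GoodDensity f₁) (hf₂ : GoodDensity f₂) :
    ∀ w w' : ℝ, 0 < w → w < w' → w' < 1 → Hfun f₁ f₂ w < Hfun f₁ f₂ w' := by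
  intro w w' h0 h h1
  have hp := hf₁.2.1
  unfold Hfun
  refine int_lt_aux
    (outer_integrable f₁ f₂ hf₁ hf₂ w) (outer_integrable f₁ f₂ hf₁ hf₂ w') ?_ ?_
  · have hne : ∀ᵐ x : ℝ, x ≠ 0 := by
      simp [ae_iff]
    filter_upwards [hne] with x hx
    exact mul_le_mul_of_nonneg_right (inner_lt f₂ hf₂ w w' h0 h h1 x hx).le (hp x).le
  · refine fun hz => (?_ : volume (Ioo (0:ℝ) 1) ≠ 0) (measure_mono_null ?_ hz)
    · simp
    · intro x hx
      exact mul_lt_mul_of_pos_right (inner_lt f₂ hf₂ w w' h0 h h1 x hx.1.ne') (hp x)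
end

section
/- Let 0 < w₁ < w₂ < ⋯ < wₙ < 1 be given weights and let θ ∈ (0,1). Suppose m̃ ∈ {1,…,n−1} is such that w_{m̃} ≤ θ < w_{m̃+1}. Then L(w_{m̃} | θ) ≤ L(w_m | θ) for every index m < m̃, and L(w_{m̃+1} | θ) ≤ L(w_m | θ) for every index m > m̃+1. Hence the minimum of L(w_m | θ) over m ∈ {1,…,n} is attained at m̃ or at m̃+1. -/
open MeasureTheory Set

lemma aux_int {f₁ f₂ : ℝ → ℝ} (h₁ : GoodDensity f₁) (h₂ : GoodDensity f₂) :
    Integrable (fun p : ℝ × ℝ => p.1 ^ 2 * f₂ p.2 * f₁ p.1) (volume.prod volume) ∧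
    Integrable (fun p : ℝ × ℝ => p.2 ^ 2 * f₂ p.2 * f₁ p.1) (volume.prod volume) := by
  obtain ⟨-, -, -, i1, m1⟩ := h₁
  obtain ⟨-, -, -, i2, m2⟩ := h₂
  have j1 : Integrable f₁ := by
    by_contra h
    rw [integral_undef h] at i1; norm_num at i1
  have j2 : Integrable f₂ := by
    by_contra h
    rw [integral_undef h] at i2; norm_num at i2
  constructor
  · refine (m1.mul_prod j2).congr (Filter.Eventually.of_forall fun p => ?_)
    show p.1 ^ 2 * f₁ p.1 * f₂ p.2 = _
    ring
  · refine (j1.mul_prod m2).congr (Filter.Eventually.of_forall fun p => ?_)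
    show f₁ p.1 * (p.2 ^ 2 * f₂ p.2) = _
    ring

lemma aux_H {f₁ f₂ : ℝ → ℝ} (h₁ : GoodDensity f₁) (h₂ : GoodDensity f₂) (w : ℝ) :
    Integrable (fun p : ℝ × ℝ =>
      (if (1 - w) * p.2 ^ 2 < w * p.1 ^ 2 then p.2 ^ 2 else 0) * f₂ p.2 * f₁ p.1)
      (volume.prod volume) := by
  have hs : MeasurableSet {p : ℝ × ℝ | (1 - w) * p.2 ^ 2 < w * p.1 ^ 2} :=
    measurableSet_lt (by fun_prop) (by fun_prop)
  refine ((aux_int h₁ h₂).2.indicator hs).congr (Filter.Eventually.of_forall fun p => ?_)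
  by_cases h : (1 - w) * p.2 ^ 2 < w * p.1 ^ 2 <;> simp [Set.indicator, h]

lemma aux_G {f₁ f₂ : ℝ → ℝ} (h₁ : GoodDensity f₁) (h₂ : GoodDensity f₂) (w : ℝ) :
    Integrable (fun p : ℝ × ℝ =>
      (if w * p.1 ^ 2 ≤ (1 - w) * p.2 ^ 2 then p.1 ^ 2 else 0) * f₂ p.2 * f₁ p.1)
      (volume.prod volume) := by
  have hs : MeasurableSet {p : ℝ × ℝ | w * p.1 ^ 2 ≤ (1 - w) * p.2 ^ 2} :=
    measurableSet_le (by fun_prop) (by fun_prop)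
  refine ((aux_int h₁ h₂).1.indicator hs).congr (Filter.Eventually.of_forall fun p => ?_)
  by_cases h : w * p.1 ^ 2 ≤ (1 - w) * p.2 ^ 2 <;> simp [Set.indicator, h]

lemma aux_L {f₁ f₂ : ℝ → ℝ} (h₁ : GoodDensity f₁) (h₂ : GoodDensity f₂) (w θ : ℝ) :
    Lfun f₁ f₂ w θ = ∫ p : ℝ × ℝ,
      (θ * ((if w * p.1 ^ 2 ≤ (1 - w) * p.2 ^ 2 then p.1 ^ 2 else 0) * f₂ p.2 * f₁ p.1)
      + (1 - θ) * ((if (1 - w) * p.2 ^ 2 < w * p.1 ^ 2 then p.2 ^ 2 else 0) * f₂ p.2 * f₁ p.1))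
      ∂(volume.prod volume) := by
  rw [integral_add ((aux_G h₁ h₂ w).const_mul _) ((aux_H h₁ h₂ w).const_mul _),
    integral_const_mul, integral_const_mul, integral_prod _ (aux_G h₁ h₂ w),
    integral_prod _ (aux_H h₁ h₂ w)]
  simp only [integral_mul_const]
  rfl

lemma aux_mono {f₁ f₂ : ℝ → ℝ} (h₁ : GoodDensity f₁) (h₂ : GoodDensity f₂) (w v θ : ℝ)
    (H : ∀ a b : ℝ, 0 ≤ a → 0 ≤ b →
      θ * (if w * a ≤ (1 - w) * b then a else 0) + (1 - θ) * (if (1 - w) * b < w * a then b else 0)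
      ≤ θ * (if v * a ≤ (1 - v) * b then a else 0)
        + (1 - θ) * (if (1 - v) * b < v * a then b else 0)) :
    Lfun f₁ f₂ w θ ≤ Lfun f₁ f₂ v θ := by
  rw [aux_L h₁ h₂, aux_L h₁ h₂]
  refine integral_mono (((aux_G h₁ h₂ w).const_mul _).add ((aux_H h₁ h₂ w).const_mul _))
    (((aux_G h₁ h₂ v).const_mul _).add ((aux_H h₁ h₂ v).const_mul _)) fun p => ?_
  have := mul_le_mul_of_nonneg_right (H (p.1 ^ 2) (p.2 ^ 2) (sq_nonneg _) (sq_nonneg _))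
    (mul_pos (h₂.2.1 p.2) (h₁.2.1 p.1)).le
  simp only
  linarith

lemma aux_low {f₁ f₂ : ℝ → ℝ} (h₁ : GoodDensity f₁) (h₂ : GoodDensity f₂) (w v θ : ℝ)
    (hv1 : v ≤ w) (hw : w ≤ θ) : Lfun f₁ f₂ w θ ≤ Lfun f₁ f₂ v θ := by
  refine aux_mono h₁ h₂ w v θ fun a b ha hb => ?_
  have e1 := mul_le_mul_of_nonneg_right hv1 ha
  have e2 := mul_le_mul_of_nonneg_right hv1 hb
  have e3 := mul_le_mul_of_nonneg_right hw ha
  have e4 := mul_le_mul_of_nonneg_right hw hb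
  split_ifs <;> linarith

lemma aux_high {f₁ f₂ : ℝ → ℝ} (h₁ : GoodDensity f₁) (h₂ : GoodDensity f₂) (w v θ : ℝ)
    (hv1 : w ≤ v) (hw : θ ≤ w) : Lfun f₁ f₂ w θ ≤ Lfun f₁ f₂ v θ := by
  refine aux_mono h₁ h₂ w v θ fun a b ha hb => ?_
  have e1 := mul_le_mul_of_nonneg_right hv1 ha
  have e2 := mul_le_mul_of_nonneg_right hv1 hb
  have e3 := mul_le_mul_of_nonneg_right hw ha
  have e4 := mul_le_mul_of_nonneg_right hw hb
  split_ifs <;> linarith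

/-- Let `0 < w₁ < ⋯ < wₙ < 1` and `θ ∈ (0,1)`. If `m̃ ∈ {1,…,n−1}` is
such that `w_{m̃} ≤ θ < w_{m̃+1}`, then `L(w_{m̃}∣θ) ≤ L(w_m∣θ)` for every `m < m̃`, and
`L(w_{m̃+1}∣θ) ≤ L(w_m∣θ)` for every `m > m̃+1`. Hence the minimum of `L(w_m∣θ)` over
`m ∈ {1,…,n}` is attained at `m̃` or `m̃+1`. -/
theorem stmt9 (f₁ f₂ : ℝ → ℝ) (hf₁ : GoodDensity f₁) (hf₂ : GoodDensity f₂)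
    (n : ℕ) (w : ℕ → ℝ)
    (hw : ∀ i, 1 ≤ i → i ≤ n → w i ∈ Set.Ioo (0 : ℝ) 1)
    (hmono : ∀ i j, 1 ≤ i → i < j → j ≤ n → w i < w j)
    (θ : ℝ) (hθ : θ ∈ Set.Ioo (0 : ℝ) 1)
    (mt : ℕ) (hmt1 : 1 ≤ mt) (hmt2 : mt + 1 ≤ n)
    (hlow : w mt ≤ θ) (hhigh : θ < w (mt + 1)) :
    (∀ m, 1 ≤ m → m < mt → Lfun f₁ f₂ (w mt) θ ≤ Lfun f₁ f₂ (w m) θ) ∧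
    (∀ m, mt + 1 < m → m ≤ n → Lfun f₁ f₂ (w (mt + 1)) θ ≤ Lfun f₁ f₂ (w m) θ) ∧
    (∀ m, 1 ≤ m → m ≤ n →
      min (Lfun f₁ f₂ (w mt) θ) (Lfun f₁ f₂ (w (mt + 1)) θ) ≤ Lfun f₁ f₂ (w m) θ) := by
  have A : ∀ m, 1 ≤ m → m < mt → Lfun f₁ f₂ (w mt) θ ≤ Lfun f₁ f₂ (w m) θ := fun m h1 h2 =>
    aux_low hf₁ hf₂ _ _ _ (hmono m mt h1 h2 (by omega)).le hlow
  have B : ∀ m, mt + 1 < m → m ≤ n → Lfun f₁ f₂ (w (mt + 1)) θ ≤ Lfun f₁ f₂ (w m) θ :=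
    fun m h1 h2 => aux_high hf₁ hf₂ _ _ _ (hmono _ m (by omega) h1 h2).le hhigh.le
  refine ⟨A, B, fun m h1 h2 => ?_⟩
  rcases lt_trichotomy m mt with h | h | h
  · exact (min_le_left _ _).trans (A m h1 h)
  · subst h; exact min_le_left _ _
  · rcases (Nat.succ_le_of_lt h).eq_or_lt with h' | h'
    · rw [← h']; exact min_le_right _ _
    · exact (min_le_right _ _).trans (B m h' h2)
end

section
/- Let 0 < w₁ < w₂ < ⋯ < wₙ < 1 be given weights. Then there exist thresholds 0 = θ₀ < θ₁ < ⋯ < θₙ = 1 such that for every m ∈ {1,…,n} and every θ in the open interval (θ_{m−1}, θ_m), L(w_m | θ) ≤ L(w_k | θ) for all k ∈ {1,…,n}; moreover for each interior threshold m ∈ {1,…,n−1}, L(w_m | θ_m) = L(w_{m+1} | θ_m). That is, the receiver's best response to a weighted-quadratic disclosure policy with ordered weights is a monotone partition preference disclosure policy. -/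
open MeasureTheory Set

lemma good_int {f : ℝ → ℝ} (hf : GoodDensity f) : Integrable f := by
  by_contra h
  have := integral_undef h
  rw [hf.2.2.2.1] at this
  exact one_ne_zero this

noncomputable def Hker (f₁ f₂ : ℝ → ℝ) (w : ℝ) (p : ℝ × ℝ) : ℝ :=
  (if (1 - w) * p.2 ^ 2 < w * p.1 ^ 2 then p.2 ^ 2 else 0) * f₂ p.2 * f₁ p.1

noncomputable def Gker (f₁ f₂ : ℝ → ℝ) (w : ℝ) (p : ℝ × ℝ) : ℝ :=
  (if w * p.1 ^ 2 ≤ (1 - w) * p.2 ^ 2 then p.1 ^ 2 else 0) * f₂ p.2 * f₁ p.1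

lemma Hker_int {f₁ f₂ : ℝ → ℝ} (hf₁ : GoodDensity f₁) (hf₂ : GoodDensity f₂) (w : ℝ) :
    Integrable (Hker f₁ f₂ w) (volume.prod volume) := by
  have h := (good_int hf₁).mul_prod hf₂.2.2.2.2
  refine h.mono' ?_ (Filter.Eventually.of_forall fun p => ?_)
  · have m1 := hf₁.1.measurable
    have m2 := hf₂.1.measurable
    refine Measurable.aestronglyMeasurable ?_
    unfold Hker
    refine Measurable.mul (Measurable.mul (Measurable.ite (measurableSet_lt (by fun_prop) (by fun_prop)) (by fun_prop) (by fun_prop)) (by fun_prop)) (by fun_prop)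
  · have a := hf₁.2.1 p.1
    have b := hf₂.2.1 p.2
    have c := sq_nonneg p.2
    have e : 0 ≤ p.2 ^ 2 * f₂ p.2 * f₁ p.1 := by positivity
    unfold Hker
    split_ifs
    · rw [Real.norm_of_nonneg e]; apply le_of_eq; ring
    · simp; positivity

lemma Gker_int {f₁ f₂ : ℝ → ℝ} (hf₁ : GoodDensity f₁) (hf₂ : GoodDensity f₂) (w : ℝ) :
    Integrable (Gker f₁ f₂ w) (volume.prod volume) := by
  have h := (hf₁.2.2.2.2).mul_prod (good_int hf₂)
  refine h.mono' ?_ (Filter.Eventually.of_forall fun p => ?_)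
  · have m1 := hf₁.1.measurable
    have m2 := hf₂.1.measurable
    refine Measurable.aestronglyMeasurable ?_
    unfold Gker
    refine Measurable.mul (Measurable.mul (Measurable.ite (measurableSet_le (by fun_prop) (by fun_prop)) (by fun_prop) (by fun_prop)) (by fun_prop)) (by fun_prop)
  · have a := hf₁.2.1 p.1
    have b := hf₂.2.1 p.2
    have e : 0 ≤ p.1 ^ 2 * f₂ p.2 * f₁ p.1 := by positivity
    unfold Gker
    split_ifs
    · rw [Real.norm_of_nonneg e]; apply le_of_eq; ring
    · simp; positivity

lemma Lfun_eq {f₁ f₂ : ℝ → ℝ} (hf₁ : GoodDensity f₁) (hf₂ : GoodDensity f₂) (w t : ℝ) :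
    Lfun f₁ f₂ w t = ∫ p, (t * Gker f₁ f₂ w p + (1 - t) * Hker f₁ f₂ w p) ∂(volume.prod volume) := by
  rw [integral_add ((Gker_int hf₁ hf₂ w).const_mul t) ((Hker_int hf₁ hf₂ w).const_mul _),
    integral_const_mul, integral_const_mul, integral_prod _ (Gker_int hf₁ hf₂ w),
    integral_prod _ (Hker_int hf₁ hf₂ w)]
  simp only [Lfun, Gfun, Hfun, Gker, Hker, integral_mul_const]

lemma Lfun_lt {f₁ f₂ : ℝ → ℝ} (hf₁ : GoodDensity f₁) (hf₂ : GoodDensity f₂) {w v : ℝ}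
    (hw : w ∈ Set.Ioo (0 : ℝ) 1) (hv : v ∈ Set.Ioo (0 : ℝ) 1) (hne : w ≠ v) :
    Lfun f₁ f₂ w w < Lfun f₁ f₂ v w := by
  have I : ∀ u, Integrable (fun p => w * Gker f₁ f₂ u p + (1 - w) * Hker f₁ f₂ u p)
      (volume.prod volume) := fun u =>
    ((Gker_int hf₁ hf₂ u).const_mul w).add ((Hker_int hf₁ hf₂ u).const_mul _)
  have key : ∀ u p, w * Gker f₁ f₂ u p + (1 - w) * Hker f₁ f₂ u p =
      (if (1 - u) * p.2 ^ 2 < u * p.1 ^ 2 then (1 - w) * p.2 ^ 2 else w * p.1 ^ 2)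
        * (f₂ p.2 * f₁ p.1) := by
    intro u p
    unfold Gker Hker
    by_cases h : (1 - u) * p.2 ^ 2 < u * p.1 ^ 2
    · rw [if_neg (not_le.2 h), if_pos h, if_pos h]; ring
    · rw [if_pos (not_lt.1 h), if_neg h, if_neg h]; ring
  have hpos : ∀ p : ℝ × ℝ, 0 < f₂ p.2 * f₁ p.1 := fun p => mul_pos (hf₂.2.1 _) (hf₁.2.1 _)
  rw [Lfun_eq hf₁ hf₂, Lfun_eq hf₁ hf₂, ← sub_pos, ← integral_sub (I v) (I w)]
  rw [integral_pos_iff_support_of_nonneg]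
  · let U : Set (ℝ × ℝ) := {p | 0 < ((1 - w) * p.2 ^ 2 - w * p.1 ^ 2) * (v - w) ∧
      0 < (v * p.1 ^ 2 - (1 - v) * p.2 ^ 2) * (v - w)}
    have hU : IsOpen U := by
      have o1 : IsOpen {p : ℝ × ℝ | 0 < ((1 - w) * p.2 ^ 2 - w * p.1 ^ 2) * (v - w)} :=
        isOpen_lt (by fun_prop) (by fun_prop)
      have o2 : IsOpen {p : ℝ × ℝ | 0 < (v * p.1 ^ 2 - (1 - v) * p.2 ^ 2) * (v - w)} :=
        isOpen_lt (by fun_prop) (by fun_prop)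
      exact o1.inter o2
    have hUne : U.Nonempty := by
      refine ⟨(√(1 - (v + w) / 2), √((v + w) / 2)), ?_⟩
      have h1 : 0 ≤ 1 - (v + w) / 2 := by linarith [hw.2, hv.2]
      have h2 : 0 ≤ (v + w) / 2 := by linarith [hw.1, hv.1]
      have h3 : 0 < (v - w) ^ 2 := by
        have := sub_ne_zero.2 hne.symm
        positivity
      simp only [U, Set.mem_ofPred_eq, Real.sq_sqrt h1, Real.sq_sqrt h2]
      constructor <;> nlinarith
    refine lt_of_lt_of_le (hU.measure_pos _ hUne) (measure_mono ?_)
    intro p hp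
    obtain ⟨hp1, hp2⟩ := hp
    rw [Function.mem_support]
    simp only [key, ← sub_mul]
    refine mul_ne_zero ?_ (hpos p).ne'
    rcases lt_or_gt_of_ne hne with h | h
    · have a := (pos_iff_pos_of_mul_pos hp1).2 (sub_pos.2 h)
      have b := (pos_iff_pos_of_mul_pos hp2).2 (sub_pos.2 h)
      rw [if_pos (by linarith), if_neg (by linarith)]
      exact a.ne'
    · have a := (neg_iff_neg_of_mul_pos hp1).2 (sub_neg.2 h)
      have b := (neg_iff_neg_of_mul_pos hp2).2 (sub_neg.2 h)
      rw [if_neg (by linarith), if_pos (by linarith)]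
      intro; linarith
  · intro p
    simp only [key, ← sub_mul, Pi.zero_apply]
    refine mul_nonneg ?_ (hpos p).le
    split_ifs <;> linarith
  · exact (I v).sub (I w)

/-- Let `0 < w₁ < ⋯ < wₙ < 1` be given weights. Then there exist
thresholds `0 = θ₀ < θ₁ < ⋯ < θₙ = 1` such that for every `m ∈ {1,…,n}` and every
`θ ∈ (θ_{m−1}, θ_m)`, `L(w_m∣θ) ≤ L(w_k∣θ)` for all `k ∈ {1,…,n}`; moreover for each
interior `m ∈ {1,…,n−1}`, `L(w_m∣θ_m) = L(w_{m+1}∣θ_m)`: the receiver's best response is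
a monotone partition preference disclosure policy. -/
theorem stmt12 (f₁ f₂ : ℝ → ℝ) (hf₁ : GoodDensity f₁) (hf₂ : GoodDensity f₂)
    (n : ℕ) (hn : 1 ≤ n) (w : ℕ → ℝ)
    (hw : ∀ i, 1 ≤ i → i ≤ n → w i ∈ Set.Ioo (0 : ℝ) 1)
    (hmono : ∀ i j, 1 ≤ i → i < j → j ≤ n → w i < w j) :
    ∃ θ : ℕ → ℝ, θ 0 = 0 ∧ θ n = 1 ∧
      (∀ i j, i < j → j ≤ n → θ i < θ j) ∧
      (∀ m, 1 ≤ m → m ≤ n → ∀ t ∈ Set.Ioo (θ (m - 1)) (θ m),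
        ∀ k, 1 ≤ k → k ≤ n → Lfun f₁ f₂ (w m) t ≤ Lfun f₁ f₂ (w k) t) ∧
      (∀ m, 1 ≤ m → m < n → Lfun f₁ f₂ (w m) (θ m) = Lfun f₁ f₂ (w (m + 1)) (θ m)) := by
  classical
  have hcross : ∀ m, ∃ x, (1 ≤ m → m < n → w m < x ∧ x < w (m + 1) ∧
      (∀ t, x ≤ t → Lfun f₁ f₂ (w (m + 1)) t ≤ Lfun f₁ f₂ (w m) t) ∧
      (∀ t, t ≤ x → Lfun f₁ f₂ (w m) t ≤ Lfun f₁ f₂ (w (m + 1)) t)) := by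
    intro m
    by_cases h : 1 ≤ m ∧ m < n
    · have hm := hw m h.1 h.2.le
      have hm' := hw (m + 1) (by omega) h.2
      have hlt := hmono m (m + 1) h.1 (by omega) h.2
      have A := Lfun_lt hf₁ hf₂ hm hm' hlt.ne
      have B := Lfun_lt hf₁ hf₂ hm' hm hlt.ne'
      unfold Lfun at A B ⊢
      generalize Gfun f₁ f₂ (w m) = g at *
      generalize Gfun f₁ f₂ (w (m + 1)) = g' at *
      generalize Hfun f₁ f₂ (w m) = k at *
      generalize Hfun f₁ f₂ (w (m + 1)) = k' at *
      have hD : 0 < (g - g') + (k' - k) := by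
        by_contra hc
        push Not at hc
        nlinarith
      have hx : (k' - k) / ((g - g') + (k' - k)) * ((g - g') + (k' - k)) = k' - k :=
        div_mul_cancel₀ _ hD.ne'
      refine ⟨(k' - k) / ((g - g') + (k' - k)), fun _ _ => ⟨?_, ?_, ?_, ?_⟩⟩
      · rw [lt_div_iff₀ hD]; nlinarith
      · rw [div_lt_iff₀ hD]; nlinarith
      · intro t ht
        rw [div_le_iff₀ hD] at ht; nlinarith
      · intro t ht
        rw [le_div_iff₀ hD] at ht; nlinarith
    · exact ⟨0, fun h1 h2 => absurd ⟨h1, h2⟩ h⟩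
  choose x hx using hcross
  let θ : ℕ → ℝ := fun m => if m = 0 then 0 else if m < n then x m else 1
  have θ0 : θ 0 = 0 := by simp [θ]
  have θn : θ n = 1 := by
    have : n ≠ 0 := by omega
    simp [θ, this]
  have θm : ∀ m, 1 ≤ m → m < n → θ m = x m := by
    intro m h1 h2
    have : m ≠ 0 := by omega
    simp [θ, this, h2]
  have step : ∀ m, m < n → θ m < θ (m + 1) := by
    intro m hm
    have a : θ m < w (m + 1) := by
      rcases Nat.eq_zero_or_pos m with h | h
      · subst h; rw [θ0]; exact (hw 1 le_rfl hn).1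
      · rw [θm m h hm]; exact (hx m h hm).2.1
    have b : w (m + 1) < θ (m + 1) := by
      rcases Nat.lt_or_ge (m + 1) n with h | h
      · rw [θm _ (by omega) h]; exact (hx _ (by omega) h).1
      · have : m + 1 = n := by omega
        rw [this, θn]; exact (hw n hn le_rfl).2
    exact a.trans b
  have mono : ∀ i j, i < j → j ≤ n → θ i < θ j := by
    intro i j hij
    induction j, hij using Nat.le_induction with
    | base => intro h; exact step i h
    | succ j hj ih => intro h; exact (ih (by omega)).trans (step j h)
  have monole : ∀ i j, i ≤ j → j ≤ n → θ i ≤ θ j := by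
    intro i j hij hj
    rcases hij.eq_or_lt with h | h
    · rw [h]
    · exact (mono i j h hj).le
  refine ⟨θ, θ0, θn, mono, ?_, ?_⟩
  · intro m hm1 hmn t ht k hk1 hkn
    have up : ∀ k, m ≤ k → k ≤ n → Lfun f₁ f₂ (w m) t ≤ Lfun f₁ f₂ (w k) t := by
      intro k hk
      induction k, hk using Nat.le_induction with
      | base => intro _; exact le_rfl
      | succ k hk ih =>
        intro h
        refine (ih (by omega)).trans ((hx k (by omega) h).2.2.2 t ?_)
        rw [← θm k (by omega) h]
        exact ht.2.le.trans (monole _ _ hk (by omega))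
    have down : ∀ d k, 1 ≤ k → k + d = m → Lfun f₁ f₂ (w m) t ≤ Lfun f₁ f₂ (w k) t := by
      intro d
      induction d with
      | zero => intro k _ h; rw [← h]; exact le_rfl
      | succ d ih =>
        intro k hk h
        refine (ih (k + 1) (by omega) (by omega)).trans ((hx k hk (by omega)).2.2.1 t ?_)
        rw [← θm k hk (by omega)]
        exact (monole _ _ (by omega) (by omega)).trans ht.1.le
    rcases le_total m k with h | h
    · exact up k h hkn
    · exact down (m - k) k hk1 (by omega)
  · intro m h1 h2
    rw [θm m h1 h2]
    exact le_antisymm ((hx m h1 h2).2.2.2 _ le_rfl) ((hx m h1 h2).2.2.1 _ le_rfl)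
end

section
/- Let 0 < w₁ < ⋯ < wₙ < 1 be weights with associated indifference thresholds 0 = θ₀ < θ₁ < ⋯ < θₙ = 1 (where for interior m, θ_m ∈ (w_m, w_{m+1}) is the unique solution of L(w_m | θ_m) = L(w_{m+1} | θ_m)). Then the ex ante expected loss decomposes as 𝓛(w₁,…,wₙ) = Σ_{m=1}^{n} ∫_{θ_{m−1}}^{θ_m} L(w_m | θ) π(θ) dθ. -/
open MeasureTheory Set

lemma dbl_mono (f₁ f₂ : ℝ → ℝ) (h1 : ∀ x, 0 < f₁ x) (h2 : ∀ x, 0 < f₂ x)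
    (c1 : Continuous f₁) (c2 : Continuous f₂)
    (k k' B : ℝ → ℝ → ℝ) (hk : ∀ x y, 0 ≤ k x y) (hkk : ∀ x y, k x y ≤ k' x y)
    (hkB : ∀ x y, k' x y ≤ B x y) (hm : Measurable (Function.uncurry k'))
    (hB : ∀ x, Integrable fun y => B x y * f₂ y)
    (hB2 : Integrable fun x => (∫ y, B x y * f₂ y) * f₁ x) :
    (∫ x, (∫ y, k x y * f₂ y) * f₁ x) ≤ ∫ x, (∫ y, k' x y * f₂ y) * f₁ x := by
  have hk' : ∀ x y, 0 ≤ k' x y := fun x y => (hk x y).trans (hkk x y)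
  have hm2 : Measurable (Function.uncurry fun x y => k' x y * f₂ y) := 
    hm.mul (c2.measurable.comp measurable_snd)
  have hin : ∀ x, Integrable fun y => k' x y * f₂ y := fun x => by
    refine (hB x).mono' (hm2.comp measurable_prodMk_left).aestronglyMeasurable ?_
    filter_upwards with y
    rw [Real.norm_of_nonneg (mul_nonneg (hk' x y) (h2 y).le)]
    exact mul_le_mul_of_nonneg_right (hkB x y) (h2 y).le
  have hout : Integrable fun x => (∫ y, k' x y * f₂ y) * f₁ x := by
    refine hB2.mono' ?_ ?_
    · exact ((hm2.stronglyMeasurable.integral_prod_right).mul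
        c1.stronglyMeasurable).aestronglyMeasurable
    · filter_upwards with x
      rw [Real.norm_of_nonneg (mul_nonneg (integral_nonneg
        fun y => mul_nonneg (hk' x y) (h2 y).le) (h1 x).le)]
      refine mul_le_mul_of_nonneg_right (integral_mono (hin x) (hB x) fun y => ?_) (h1 x).le
      exact mul_le_mul_of_nonneg_right (hkB x y) (h2 y).le
  refine integral_mono_of_nonneg ?_ hout ?_
  · filter_upwards with x
    exact mul_nonneg (integral_nonneg fun y => mul_nonneg (hk x y) (h2 y).le) (h1 x).le
  · filter_upwards with x
    refine mul_le_mul_of_nonneg_right (integral_mono_of_nonneg ?_ (hin x) ?_) (h1 x).le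
    · filter_upwards with y
      exact mul_nonneg (hk x y) (h2 y).le
    · filter_upwards with y
      exact mul_le_mul_of_nonneg_right (hkk x y) (h2 y).le

lemma H_mono {f₁ f₂ : ℝ → ℝ} (hf₁ : GoodDensity f₁) (hf₂ : GoodDensity f₂) {a b : ℝ}
    (hab : a ≤ b) : Hfun f₁ f₂ a ≤ Hfun f₁ f₂ b := by
  refine dbl_mono f₁ f₂ hf₁.2.1 hf₂.2.1 hf₁.1 hf₂.1
    (fun x y => if (1 - a) * y ^ 2 < a * x ^ 2 then y ^ 2 else 0)
    (fun x y => if (1 - b) * y ^ 2 < b * x ^ 2 then y ^ 2 else 0) (fun _ y => y ^ 2)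
    ?_ ?_ ?_ ?_ ?_ ?_
  · intro x y; split_ifs <;> positivity
  · intro x y
    split_ifs with h h'
    · exact le_rfl
    · exfalso
      apply h'
      nlinarith [mul_nonneg (sub_nonneg.2 hab) (sq_nonneg x),
        mul_nonneg (sub_nonneg.2 hab) (sq_nonneg y)]
    · positivity
    · exact le_rfl
  · intro x y; split_ifs <;> first | positivity | exact le_rfl
  · refine Measurable.ite (measurableSet_lt ?_ ?_) ?_ ?_ <;> fun_prop
  · exact fun _ => hf₂.2.2.2.2
  · exact (good_int hf₁).const_mul _

lemma G_anti {f₁ f₂ : ℝ → ℝ} (hf₁ : GoodDensity f₁) (hf₂ : GoodDensity f₂) {a b : ℝ}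
    (hab : a ≤ b) : Gfun f₁ f₂ b ≤ Gfun f₁ f₂ a := by
  refine dbl_mono f₁ f₂ hf₁.2.1 hf₂.2.1 hf₁.1 hf₂.1
    (fun x y => if b * x ^ 2 ≤ (1 - b) * y ^ 2 then x ^ 2 else 0)
    (fun x y => if a * x ^ 2 ≤ (1 - a) * y ^ 2 then x ^ 2 else 0) (fun x _ => x ^ 2)
    ?_ ?_ ?_ ?_ ?_ ?_
  · intro x y; split_ifs <;> positivity
  · intro x y
    split_ifs with h h'
    · exact le_rfl
    · exfalso
      apply h'
      nlinarith [mul_nonneg (sub_nonneg.2 hab) (sq_nonneg x),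
        mul_nonneg (sub_nonneg.2 hab) (sq_nonneg y)]
    · positivity
    · exact le_rfl
  · intro x y; split_ifs <;> first | positivity | exact le_rfl
  · refine Measurable.ite (measurableSet_le ?_ ?_) ?_ ?_ <;> fun_prop
  · exact fun x => (good_int hf₂).const_mul _
  · simp only [integral_const_mul, hf₂.2.2.2.1, mul_one]
    exact hf₁.2.2.2.2

/-- Let `0 < w₁ < ⋯ < wₙ < 1` with associated indifference thresholds
`0 = θ₀ < θ₁ < ⋯ < θₙ = 1`, where each interior `θ_m ∈ (w_m, w_{m+1})` solves
`L(w_m∣θ_m) = L(w_{m+1}∣θ_m)`. Then the ex ante expected loss decomposes as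
`𝓛(w₁,…,wₙ) = Σ_{m=1}^{n} ∫_{θ_{m−1}}^{θ_m} L(w_m∣θ) π(θ) dθ`. -/
theorem stmt16 (f₁ f₂ : ℝ → ℝ) (hf₁ : GoodDensity f₁) (hf₂ : GoodDensity f₂)
    (π : ℝ → ℝ) (hπ_meas : Measurable π) (hπ_nonneg : ∀ x, 0 ≤ π x)
    (hπ_total : (∫ θ in (0 : ℝ)..1, π θ) = 1)
    (n : ℕ) (hn : 1 ≤ n) (w θs : ℕ → ℝ)
    (hw : ∀ i, 1 ≤ i → i ≤ n → w i ∈ Set.Ioo (0 : ℝ) 1)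
    (hwmono : ∀ i j, 1 ≤ i → i < j → j ≤ n → w i < w j)
    (hθ0 : θs 0 = 0) (hθn : θs n = 1)
    (hθmono : ∀ i j, i < j → j ≤ n → θs i < θs j)
    (hθint : ∀ m, 1 ≤ m → m < n → θs m ∈ Set.Ioo (w m) (w (m + 1)) ∧
      Lfun f₁ f₂ (w m) (θs m) = Lfun f₁ f₂ (w (m + 1)) (θs m)) :
    (∫ t in (0 : ℝ)..1,
        ((Finset.Icc 1 n).inf' (Finset.nonempty_Icc.mpr hn)
          fun m => Lfun f₁ f₂ (w m) t) * π t) =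
      ∑ m ∈ Finset.Icc 1 n, ∫ t in (θs (m - 1))..(θs m), Lfun f₁ f₂ (w m) t * π t := by
  have hθle : ∀ i j, i ≤ j → j ≤ n → θs i ≤ θs j := fun i j h hj => by
    rcases h.eq_or_lt with rfl | h
    · exact le_rfl
    · exact (hθmono i j h hj).le
  have key : ∀ m, 1 ≤ m → m < n → ∀ t,
      (t ≤ θs m → Lfun f₁ f₂ (w m) t ≤ Lfun f₁ f₂ (w (m + 1)) t) ∧
      (θs m ≤ t → Lfun f₁ f₂ (w (m + 1)) t ≤ Lfun f₁ f₂ (w m) t) := by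
    intro m h1 h2 t
    have hlt := (hwmono m (m + 1) h1 (Nat.lt_succ_self m) h2).le
    have hH := H_mono hf₁ hf₂ hlt
    have hG := G_anti hf₁ hf₂ hlt
    have he := (hθint m h1 h2).2
    unfold Lfun at he ⊢
    constructor
    · intro h
      nlinarith [mul_nonneg (sub_nonneg.2 h) (sub_nonneg.2 hH),
        mul_nonneg (sub_nonneg.2 h) (sub_nonneg.2 hG)]
    · intro h
      nlinarith [mul_nonneg (sub_nonneg.2 h) (sub_nonneg.2 hH),
        mul_nonneg (sub_nonneg.2 h) (sub_nonneg.2 hG)]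
  have up : ∀ m t, 1 ≤ m → t ≤ θs m → ∀ j, m ≤ j → j ≤ n →
      Lfun f₁ f₂ (w m) t ≤ Lfun f₁ f₂ (w j) t := by
    intro m t h1 ht j hj
    induction j, hj using Nat.le_induction with
    | base => intro _; exact le_rfl
    | succ j hj ih =>
      intro hjn
      exact (ih (by omega)).trans ((key j (by omega) (by omega) t).1
        (ht.trans (hθle m j hj (by omega))))
  have down : ∀ j t, 1 ≤ j → ∀ m, j ≤ m → m ≤ n → θs (m - 1) ≤ t →
      Lfun f₁ f₂ (w m) t ≤ Lfun f₁ f₂ (w j) t := by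
    intro j t h1 m hm
    induction m, hm using Nat.le_induction with
    | base => intro _ _; exact le_rfl
    | succ m hm ih =>
      intro hmn ht
      rw [Nat.add_sub_cancel] at ht
      exact ((key m (by omega) (by omega) t).2 ht).trans
        (ih (by omega) ((hθle (m - 1) m (by omega) (by omega)).trans ht))
  have hπi : IntervalIntegrable π volume 0 1 := by
    by_contra h
    rw [intervalIntegral.integral_undef h] at hπ_total
    norm_num at hπ_total
  have hcont : Continuous fun t => (Finset.Icc 1 n).inf' (Finset.nonempty_Icc.mpr hn)
      fun m => Lfun f₁ f₂ (w m) t := by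
    refine Continuous.finset_inf'_apply _ fun m _ => ?_
    unfold Lfun
    fun_prop
  have hI := hπi.continuousOn_mul hcont.continuousOn
  have hsum := intervalIntegral.sum_integral_adjacent_intervals (a := θs) (n := n)
    (μ := volume) (f := fun t => ((Finset.Icc 1 n).inf' (Finset.nonempty_Icc.mpr hn)
      fun m => Lfun f₁ f₂ (w m) t) * π t) (fun k hk => hI.mono_set (by
        rw [uIcc_of_le (hθle k (k + 1) (by omega) hk), uIcc_of_le zero_le_one]
        refine Icc_subset_Icc ?_ ?_
        · rw [← hθ0]; exact hθle 0 k (by omega) hk.le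
        · rw [← hθn]; exact hθle (k + 1) n hk le_rfl))
  rw [hθ0, hθn] at hsum
  have hshift := Finset.sum_Ico_add' (fun m => ∫ t in (θs (m - 1))..(θs m),
    ((Finset.Icc 1 n).inf' (Finset.nonempty_Icc.mpr hn)
      fun m => Lfun f₁ f₂ (w m) t) * π t) 0 n 1
  simp only [Nat.add_sub_cancel] at hshift
  rw [← hsum, Finset.range_eq_Ico, hshift]
  have hset : Finset.Ico (0 + 1) (n + 1) = Finset.Icc 1 n := by
    ext x; simp only [Finset.mem_Ico, Finset.mem_Icc]; omega
  rw [hset]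
  refine Finset.sum_congr rfl fun m hm => ?_
  have hm' := Finset.mem_Icc.1 hm
  refine intervalIntegral.integral_congr fun t ht => ?_
  rw [uIcc_of_le (hθle (m - 1) m (by omega) hm'.2)] at ht
  have : ((Finset.Icc 1 n).inf' (Finset.nonempty_Icc.mpr hn)
      fun m => Lfun f₁ f₂ (w m) t) = Lfun f₁ f₂ (w m) t := by
    refine le_antisymm (Finset.inf'_le _ hm) (Finset.le_inf' _ _ fun j hj => ?_)
    have hj' := Finset.mem_Icc.1 hj
    rcases le_total m j with h | h
    · exact up m t hm'.1 ht.2 j h hj'.2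
    · exact down j t hj'.1 m h hm'.2 ht.1
  rw [this]
end
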